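/- For -2 < γ ≤ 1, α, β > 0, and any x, v in ℝ³, the double integral over t from 0 to ∞ and v* in ℝ³ of ‖v - v*‖^γ · exp(-α‖x + t(v - v*)‖² - β‖v*‖²) dv* dt is at most √(π/α) · (2π/(γ+2) + (1/β)^{3/2}·π^{3/2}). -/

import Mathlib

/-!
After the substitution `w = v - vs` and Tonelli, the time integral comes first. For `w ≠ 0` the
function `t ↦ exp (-α‖x + t w‖²)` is dominated by a shifted one-dimensional Gaussian of rate
`α‖w‖²`, so its integral over the whole line is at most `√(π/α) / ‖w‖`
(`lintegral_line_le`).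

Outside the unit ball the factor `‖w‖ ^ (γ - 1)` is at most `1` because `γ ≤ 1`, and what remains
is the three-dimensional Gaussian integral, `(π/β)^{3/2}`.

On the unit ball the Gaussian in `vs` is bounded by `1`. The ball is symmetric under `w ↦ -w`, and
the half-line integrals for `w` and `-w` add up to the integral over the whole line. Averaging over
the two (`lintegral_ball_le`) gains a factor `1/2` over the crude bound, and
`∫_{‖w‖<1} ‖w‖ ^ (γ - 1) = 4π / (γ + 2)` then gives the constant `2π / (γ + 2)`.

All estimates are made for the lower Lebesgue integral, where Tonelli needs no integrability.
-/

open MeasureTheory Real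

/-- The integral of `exp (-α‖x + t w‖²)` over the half-line `t > 0`, with values in `[0, ∞]`. -/
noncomputable def halfLine (α : ℝ) (x w : EuclideanSpace ℝ (Fin 3)) : ENNReal :=
  ∫⁻ t in Set.Ioi (0 : ℝ), ENNReal.ofReal (Real.exp (-α * ‖x + t • w‖ ^ 2))

lemma measurable_halfLine (α : ℝ) (x : EuclideanSpace ℝ (Fin 3)) :
    Measurable (halfLine α x) := by
  unfold halfLine
  refine Measurable.lintegral_prod_right' (f := fun p : EuclideanSpace ℝ (Fin 3) × ℝ =>
    ENNReal.ofReal (Real.exp (-α * ‖x + p.2 • p.1‖ ^ 2))) ?_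
  fun_prop

/-- By Cauchy–Schwarz against the direction of `w`, the integrand is dominated by a shifted
Gaussian in `t`. -/
lemma lintegral_line_le {α : ℝ} (hα : 0 < α) (x : EuclideanSpace ℝ (Fin 3))
    {w : EuclideanSpace ℝ (Fin 3)} (hw : w ≠ 0) :
    ∫⁻ t : ℝ, ENNReal.ofReal (Real.exp (-α * ‖x + t • w‖ ^ 2)) ≤
      ENNReal.ofReal (√(π / α) / ‖w‖) := by
  have hw0 : 0 < ‖w‖ := norm_pos_iff.mpr hw
  set b : ℝ := α * ‖w‖ ^ 2 with hb_def
  have hb : 0 < b := by positivity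
  set s : ℝ := inner ℝ x w / ‖w‖ ^ 2 with hs
  have hpt (t : ℝ) : Real.exp (-α * ‖x + t • w‖ ^ 2) ≤ Real.exp (-b * (t + s) ^ 2) := by
    apply Real.exp_le_exp.mpr
    have h1 : inner ℝ (x + t • w) w = ‖w‖ ^ 2 * (t + s) := by
      rw [inner_add_left, real_inner_smul_left, real_inner_self_eq_norm_sq, hs]
      field_simp
      ring
    have h2 := abs_real_inner_le_norm (x + t • w) w
    have h3 : (‖w‖ ^ 2 * (t + s)) ^ 2 ≤ (‖x + t • w‖ * ‖w‖) ^ 2 := by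
      rw [← h1, ← sq_abs]
      gcongr
    have h4 : ‖w‖ ^ 2 * (t + s) ^ 2 ≤ ‖x + t • w‖ ^ 2 := by
      have : 0 < ‖w‖ ^ 2 := by positivity
      refine le_of_mul_le_mul_left ?_ this
      linarith [h3]
    rw [hb_def]
    nlinarith [mul_le_mul_of_nonneg_left h4 hα.le]
  calc ∫⁻ t : ℝ, ENNReal.ofReal (Real.exp (-α * ‖x + t • w‖ ^ 2))
      ≤ ∫⁻ t : ℝ, ENNReal.ofReal (Real.exp (-b * (t + s) ^ 2)) :=
        lintegral_mono fun t => ENNReal.ofReal_le_ofReal (hpt t)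
    _ = ∫⁻ t : ℝ, ENNReal.ofReal (Real.exp (-b * t ^ 2)) :=
        lintegral_add_right_eq_self (fun t => ENNReal.ofReal (Real.exp (-b * t ^ 2))) s
    _ = ENNReal.ofReal (√(π / b)) := by
        rw [← ofReal_integral_eq_lintegral_ofReal (integrable_exp_neg_mul_sq hb)
          (Filter.Eventually.of_forall fun t => (Real.exp_pos _).le), integral_gaussian]
    _ = ENNReal.ofReal (√(π / α) / ‖w‖) := by
        rw [hb_def, ← div_div, Real.sqrt_div' _ (by positivity), Real.sqrt_sq hw0.le]

lemma halfLine_le {α : ℝ} (hα : 0 < α) (x : EuclideanSpace ℝ (Fin 3))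
    {w : EuclideanSpace ℝ (Fin 3)} (hw : w ≠ 0) :
    halfLine α x w ≤ ENNReal.ofReal (√(π / α) / ‖w‖) :=
  (setLIntegral_le_lintegral _ _).trans (lintegral_line_le hα x hw)

/-- The half-lines in directions `w` and `-w` together make up the whole line. -/
lemma halfLine_add_neg_le {α : ℝ} (hα : 0 < α) (x : EuclideanSpace ℝ (Fin 3))
    {w : EuclideanSpace ℝ (Fin 3)} (hw : w ≠ 0) :
    halfLine α x w + halfLine α x (-w) ≤ ENNReal.ofReal (√(π / α) / ‖w‖) := by
  refine le_trans (le_of_eq ?_) (lintegral_line_le hα x hw)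
  have h : halfLine α x (-w) =
      ∫⁻ t in Set.Iio (0 : ℝ), ENNReal.ofReal (Real.exp (-α * ‖x + t • w‖ ^ 2)) := by
    unfold halfLine
    rw [← lintegral_indicator measurableSet_Ioi, ← lintegral_indicator measurableSet_Iio,
      ← lintegral_neg_eq_self]
    congr 1 with t
    simp [Set.indicator]
  rw [h, halfLine, setLIntegral_congr Iio_ae_eq_Iic, ← Set.compl_Ioi]
  exact lintegral_add_compl _ measurableSet_Ioi

/-- Integration in polar coordinates; `γ - 1 > -3` makes the singularity integrable. -/
lemma lintegral_ball_rpow {γ : ℝ} (hγ : -2 < γ) :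
    ∫⁻ w in Metric.ball (0 : EuclideanSpace ℝ (Fin 3)) 1, ENNReal.ofReal (‖w‖ ^ (γ - 1)) =
      ENNReal.ofReal (4 * π / (γ + 2)) := by
  have hpow : Set.EqOn (fun y : ℝ => y ^ (3 - 1) • y ^ (γ - 1)) (fun y => y ^ (γ + 1))
      (Set.Ioo 0 1) := by
    intro y hy
    simp only [smul_eq_mul]
    rw [← Real.rpow_natCast, ← Real.rpow_add hy.1]
    congr 1
    push_cast
    ring
  have hint : IntegrableOn (fun w : EuclideanSpace ℝ (Fin 3) => ‖w‖ ^ (γ - 1))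
      (Metric.ball 0 1) := by
    rw [integrableOn_fun_norm_addHaar volume (f := fun y : ℝ => y ^ (γ - 1)),
      finrank_euclideanSpace_fin, integrableOn_congr_fun hpow measurableSet_Ioo,
      intervalIntegral.integrableOn_Ioo_rpow_iff one_pos]
    linarith
  rw [← ofReal_integral_eq_lintegral_ofReal hint
    (Filter.Eventually.of_forall fun w => by positivity)]
  congr 1
  have h1 : ∫ w in Metric.ball (0 : EuclideanSpace ℝ (Fin 3)) 1, ‖w‖ ^ (γ - 1) =
      ∫ w : EuclideanSpace ℝ (Fin 3),
        (Set.Iio (1 : ℝ)).indicator (fun y => y ^ (γ - 1)) ‖w‖ := by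
    rw [← integral_indicator Metric.isOpen_ball.measurableSet]
    congr 1 with w
    simp [Set.indicator]
  rw [h1, integral_fun_norm_addHaar volume
    ((Set.Iio (1 : ℝ)).indicator (fun y => y ^ (γ - 1))), finrank_euclideanSpace_fin]
  have h2 : ∫ y in Set.Ioi (0 : ℝ), y ^ (3 - 1) •
      (Set.Iio (1 : ℝ)).indicator (fun y => y ^ (γ - 1)) y = 1 / (γ + 2) := by
    have : ∀ y : ℝ, y ^ (3 - 1) • (Set.Iio (1 : ℝ)).indicator (fun y => y ^ (γ - 1)) y =
        (Set.Iio (1 : ℝ)).indicator (fun y => y ^ (3 - 1) • y ^ (γ - 1)) y := by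
      intro y
      simp [Set.indicator]
    simp_rw [this]
    rw [setIntegral_indicator measurableSet_Iio, Set.Ioi_inter_Iio,
      setIntegral_congr_fun measurableSet_Ioo hpow, ← integral_Ioc_eq_integral_Ioo,
      ← intervalIntegral.integral_of_le zero_le_one, integral_rpow (Or.inl (by linarith)),
      Real.one_rpow, Real.zero_rpow (by linarith)]
    ring_nf
  rw [h2, Measure.real, EuclideanSpace.volume_ball_fin_three]
  rw [ENNReal.toReal_mul, ENNReal.toReal_pow, ENNReal.toReal_ofReal zero_le_one,
    ENNReal.toReal_ofReal (by positivity)]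
  simp only [nsmul_eq_mul, smul_eq_mul]
  push_cast
  ring

/-- The contribution of the unit ball, symmetrized under `w ↦ -w`. -/
lemma lintegral_ball_le {γ α : ℝ} (hγ : -2 < γ) (hα : 0 < α)
    (x : EuclideanSpace ℝ (Fin 3)) :
    ∫⁻ w in Metric.ball (0 : EuclideanSpace ℝ (Fin 3)) 1,
        ENNReal.ofReal (‖w‖ ^ γ) * halfLine α x w ≤
      ENNReal.ofReal (√(π / α) * (2 * π / (γ + 2))) := by
  set B := Metric.ball (0 : EuclideanSpace ℝ (Fin 3)) 1
  set I := ∫⁻ w in B, ENNReal.ofReal (‖w‖ ^ γ) * halfLine α x w with hI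
  have hB : MeasurableSet B := Metric.isOpen_ball.measurableSet
  have hH := measurable_halfLine α x
  have hneg : I = ∫⁻ w in B, ENNReal.ofReal (‖w‖ ^ γ) * halfLine α x (-w) := by
    rw [hI, ← lintegral_indicator hB, ← lintegral_indicator hB, ← lintegral_neg_eq_self]
    congr 1 with w
    simp [Set.indicator, B]
  have hsum : 2 * I ≤ ENNReal.ofReal (√(π / α)) * ENNReal.ofReal (4 * π / (γ + 2)) := by
    rw [two_mul]
    nth_rewrite 2 [hneg]
    rw [hI, ← lintegral_add_left (by fun_prop), ← lintegral_ball_rpow hγ,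
      ← lintegral_const_mul _ (by fun_prop)]
    -- The singular point `w = 0` is negligible.
    refine lintegral_mono_ae (ae_restrict_of_ae ?_)
    filter_upwards [Measure.ae_ne volume (0 : EuclideanSpace ℝ (Fin 3))] with w hw
    have hw0 : 0 < ‖w‖ := norm_pos_iff.mpr hw
    rw [← mul_add]
    refine (mul_le_mul_right (halfLine_add_neg_le hα x hw) _).trans (le_of_eq ?_)
    rw [← ENNReal.ofReal_mul (by positivity), ← ENNReal.ofReal_mul (by positivity),
      Real.rpow_sub_one hw0.ne']
    congr 1
    ring
  have h2 : ENNReal.ofReal (√(π / α)) * ENNReal.ofReal (4 * π / (γ + 2)) =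
      2 * ENNReal.ofReal (√(π / α) * (2 * π / (γ + 2))) := by
    rw [← ENNReal.ofReal_mul (by positivity), ← ENNReal.ofReal_ofNat 2,
      ← ENNReal.ofReal_mul (by norm_num)]
    congr 1
    ring
  rw [h2] at hsum
  exact (ENNReal.mul_le_mul_iff_right (by norm_num) (by norm_num)).mp hsum

lemma lintegral_gaussian_three {β : ℝ} (hβ : 0 < β) (v : EuclideanSpace ℝ (Fin 3)) :
    ∫⁻ w : EuclideanSpace ℝ (Fin 3), ENNReal.ofReal (Real.exp (-β * ‖v - w‖ ^ 2)) =
      ENNReal.ofReal ((1 / β) ^ ((3 : ℝ) / 2) * π ^ ((3 : ℝ) / 2)) := by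
  have hval := GaussianFourier.integral_rexp_neg_mul_sq_norm
    (V := EuclideanSpace ℝ (Fin 3)) hβ
  rw [lintegral_sub_left_eq_self
      (fun u : EuclideanSpace ℝ (Fin 3) => ENNReal.ofReal (Real.exp (-β * ‖u‖ ^ 2))) v,
    ← ofReal_integral_eq_lintegral_ofReal
      (Integrable.of_integral_ne_zero (by rw [hval]; positivity))
      (Filter.Eventually.of_forall fun t => (Real.exp_pos _).le), hval,
    finrank_euclideanSpace_fin, ← Real.mul_rpow (by positivity) (by positivity)]
  congr 2
  ring

theorem time_velocity_double_integral_bound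
    (γ : ℝ) (hγ1 : -2 < γ) (hγ2 : γ ≤ 1)
    (α β : ℝ) (hα : 0 < α) (hβ : 0 < β)
    (x v : EuclideanSpace ℝ (Fin 3)) :
    (∫ t in Set.Ioi (0 : ℝ), ∫ vs : EuclideanSpace ℝ (Fin 3),
        ‖v - vs‖ ^ γ *
          Real.exp (-α * ‖x + t • (v - vs)‖ ^ 2 - β * ‖vs‖ ^ 2)) ≤
      Real.sqrt (π / α) *
        (2 * π / (γ + 2) + (1 / β) ^ ((3 : ℝ) / 2) * π ^ ((3 : ℝ) / 2)) := by
  have hγ3 : 0 < γ + 2 := by linarith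
  set B := Metric.ball (0 : EuclideanSpace ℝ (Fin 3)) 1
  have hB : MeasurableSet B := Metric.isOpen_ball.measurableSet
  set C := √(π / α) with hC
  refine (ENNReal.ofReal_le_ofReal_iff (by positivity)).mp ?_
  -- The weight in `w = v - vs`, with the Gaussian in `t` split off.
  set g : EuclideanSpace ℝ (Fin 3) → ENNReal := fun w =>
    ENNReal.ofReal (‖w‖ ^ γ) * ENNReal.ofReal (Real.exp (-β * ‖v - w‖ ^ 2)) with hg
  have hgm : Measurable g := by fun_prop
  have hsubst (t : ℝ) : ∫⁻ vs : EuclideanSpace ℝ (Fin 3), ‖‖v - vs‖ ^ γ *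
      Real.exp (-α * ‖x + t • (v - vs)‖ ^ 2 - β * ‖vs‖ ^ 2)‖ₑ =
      ∫⁻ w, g w * ENNReal.ofReal (Real.exp (-α * ‖x + t • w‖ ^ 2)) := by
    rw [← lintegral_sub_left_eq_self
      (fun w => g w * ENNReal.ofReal (Real.exp (-α * ‖x + t • w‖ ^ 2))) v]
    congr 1 with vs
    rw [Real.enorm_of_nonneg (by positivity), hg]
    simp only [sub_sub_cancel]
    rw [← ENNReal.ofReal_mul (by positivity), ← ENNReal.ofReal_mul (by positivity), mul_assoc,
      ← Real.exp_add]
    congr 3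
    ring
  have hin : ∫⁻ w in B, g w * halfLine α x w ≤ ENNReal.ofReal (C * (2 * π / (γ + 2))) := by
    refine le_trans (lintegral_mono fun w => ?_) (lintegral_ball_le hγ1 hα x)
    refine mul_le_mul_left (mul_le_of_le_one_right' ?_) _
    rw [ENNReal.ofReal_le_one, Real.exp_le_one_iff]
    nlinarith [mul_nonneg hβ.le (sq_nonneg ‖v - w‖)]
  have hout : ∫⁻ w in Bᶜ, g w * halfLine α x w ≤
      ENNReal.ofReal (C * ((1 / β) ^ ((3 : ℝ) / 2) * π ^ ((3 : ℝ) / 2))) := by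
    rw [ENNReal.ofReal_mul (by positivity), ← lintegral_gaussian_three hβ v,
      ← lintegral_const_mul _ (by fun_prop)]
    refine le_trans (setLIntegral_mono (by fun_prop) fun w hw => ?_)
      (setLIntegral_le_lintegral Bᶜ _)
    have hw1 : 1 ≤ ‖w‖ := by simpa [B] using hw
    have hw0 : 0 < ‖w‖ := by linarith
    refine (mul_le_mul_right (halfLine_le hα x (norm_pos_iff.mp hw0)) _).trans ?_
    rw [hg, mul_right_comm, ← ENNReal.ofReal_mul (by positivity)]
    refine mul_le_mul_left (ENNReal.ofReal_le_ofReal ?_) _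
    have h1 : ‖w‖ ^ (γ - 1) ≤ 1 :=
      Real.rpow_le_one_of_one_le_of_nonpos hw1 (by linarith)
    rw [Real.rpow_sub_one hw0.ne'] at h1
    calc ‖w‖ ^ γ * (C / ‖w‖) = C * (‖w‖ ^ γ / ‖w‖) := by ring
      _ ≤ C * 1 := by gcongr
      _ = C := mul_one C
  calc ENNReal.ofReal (∫ t in Set.Ioi (0 : ℝ), ∫ vs : EuclideanSpace ℝ (Fin 3),
        ‖v - vs‖ ^ γ * Real.exp (-α * ‖x + t • (v - vs)‖ ^ 2 - β * ‖vs‖ ^ 2))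
      ≤ ‖∫ t in Set.Ioi (0 : ℝ), ∫ vs : EuclideanSpace ℝ (Fin 3),
        ‖v - vs‖ ^ γ * Real.exp (-α * ‖x + t • (v - vs)‖ ^ 2 - β * ‖vs‖ ^ 2)‖ₑ :=
        Real.ofReal_le_enorm _
    _ ≤ ∫⁻ t in Set.Ioi (0 : ℝ), ∫⁻ vs : EuclideanSpace ℝ (Fin 3), ‖‖v - vs‖ ^ γ *
          Real.exp (-α * ‖x + t • (v - vs)‖ ^ 2 - β * ‖vs‖ ^ 2)‖ₑ :=
        (enorm_integral_le_lintegral_enorm _).trans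
          (lintegral_mono fun t => enorm_integral_le_lintegral_enorm _)
    _ = ∫⁻ t in Set.Ioi (0 : ℝ), ∫⁻ w,
          g w * ENNReal.ofReal (Real.exp (-α * ‖x + t • w‖ ^ 2)) := by
        simp_rw [hsubst]
    _ = ∫⁻ w, g w * halfLine α x w := by
        rw [lintegral_lintegral_swap (by fun_prop)]
        congr 1 with w
        rw [lintegral_const_mul _ (by fun_prop), halfLine]
    _ ≤ ENNReal.ofReal (C * (2 * π / (γ + 2))) +
          ENNReal.ofReal (C * ((1 / β) ^ ((3 : ℝ) / 2) * π ^ ((3 : ℝ) / 2))) := by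
        rw [← lintegral_add_compl _ hB]
        exact add_le_add hin hout
    _ = ENNReal.ofReal (C * (2 * π / (γ + 2) +
          (1 / β) ^ ((3 : ℝ) / 2) * π ^ ((3 : ℝ) / 2))) := by
        rw [← ENNReal.ofReal_add (by positivity) (by positivity), mul_add]
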